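/- Let G ≤ PL₊(I) and let H be any subgroup of the split group S(G) with G ≤ H ≤ S(G). Then the derived length of G equals the derived length of H (in particular, G is soluble if and only if H is soluble). -/

import Mathlib

open Set

namespace PLPaper

/-- We model `PL₊(I)` inside the group of bijections of `ℝ` with *opposite*
composition, so that the group acts on `ℝ` on the right:
`x · (g * h) = (x · g) · h`. -/
abbrev PermR : Type := (Equiv.Perm ℝ)ᵐᵒᵖ

/-- The (right) action of `g` on the point `x`. -/
def ap (g : PermR) (x : ℝ) : ℝ := g.unop x

/-- `g` is affine on a neighbourhood of `x`. -/
def IsLocallyAffineAt (g : PermR) (x : ℝ) : Prop :=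
  ∃ m b : ℝ, ∀ᶠ y in nhds x, ap g y = m * y + b

/-- The breakpoints of `g`: points of `(0,1)` where `g` is not locally affine
(equivalently, for a PL map, where the derivative fails to exist). -/
def Breakpoints (g : PermR) : Set ℝ :=
  {x ∈ Ioo (0:ℝ) 1 | ¬ IsLocallyAffineAt g x}

/-- `g` is an orientation-preserving piecewise-linear homeomorphism of `[0,1]`
(extended by the identity to all of `ℝ`), with finitely many breakpoints. -/
def IsPL (g : PermR) : Prop :=
  StrictMono (ap g) ∧ (∀ x ∉ Ioo (0:ℝ) 1, ap g x = x) ∧ (Breakpoints g).Finite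

/-- The support of `g`. -/
def Supp (g : PermR) : Set ℝ := {x | ap g x ≠ x}

/-- `(a,b)` is an orbital of `g`, i.e. a connected component of `Supp g`. -/
def IsOrbital (g : PermR) (a b : ℝ) : Prop :=
  a < b ∧ Ioo a b ⊆ Supp g ∧ a ∉ Supp g ∧ b ∉ Supp g

/-- The support of a subgroup `G`. -/
def GSupp (G : Subgroup PermR) : Set ℝ := ⋃ g ∈ (G : Set PermR), Supp g

/-- `(a,b)` is an orbital of the group `G`, i.e. a connected component of its support. -/
def IsGroupOrbital (G : Subgroup PermR) (a b : ℝ) : Prop :=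
  a < b ∧ Ioo a b ⊆ GSupp G ∧ a ∉ GSupp G ∧ b ∉ GSupp G

/-- The pair `g, h` carries a transition chain: orbitals `(a,b)` of `g` and
`(c,d)` of `h` with `a < c < b < d`. -/
def ElemsTransitionChain (g h : PermR) : Prop :=
  ∃ a b c d : ℝ, IsOrbital g a b ∧ IsOrbital h c d ∧ a < c ∧ c < b ∧ b < d

/-- The pair `g, h` carries a one-sided overlap: orbitals `(a,b)` of `g` and
`(a,c)` of `h`, or `(a,b)` of `g` and `(c,b)` of `h`, where `a < c < b`. -/
def ElemsOneSidedOverlap (g h : PermR) : Prop :=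
  ∃ a b c : ℝ, a < c ∧ c < b ∧
    ((IsOrbital g a b ∧ IsOrbital h a c) ∨ (IsOrbital g a b ∧ IsOrbital h c b))

def AdmitsTransitionChain (G : Subgroup PermR) : Prop :=
  ∃ g ∈ G, ∃ h ∈ G, ElemsTransitionChain g h

def AdmitsOneSidedOverlap (G : Subgroup PermR) : Prop :=
  ∃ g ∈ G, ∃ h ∈ G, ElemsOneSidedOverlap g h

/-- `G` admits a bad overlap: orbitals `A` of `f ∈ G` and `B` of `g ∈ G` which
intersect, are distinct, and neither closure is contained in the other orbital. -/
def AdmitsBadOverlap (G : Subgroup PermR) : Prop :=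
  ∃ f ∈ G, ∃ g ∈ G, ∃ a b c d : ℝ, IsOrbital f a b ∧ IsOrbital g c d ∧
    (Ioo a b ∩ Ioo c d).Nonempty ∧ Ioo a b ≠ Ioo c d ∧
    ¬ Icc a b ⊆ Ioo c d ∧ ¬ Icc c d ⊆ Ioo a b

/-- A tower: a set of signed orbitals `((a,b), g)` with pairwise nested orbitals,
where equal orbitals force equal signatures. -/
def IsTower (T : Set ((ℝ × ℝ) × PermR)) : Prop :=
  (∀ p ∈ T, IsOrbital p.2 p.1.1 p.1.2) ∧
  (∀ p ∈ T, ∀ q ∈ T,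
      Ioo p.1.1 p.1.2 ⊆ Ioo q.1.1 q.1.2 ∨ Ioo q.1.1 q.1.2 ⊆ Ioo p.1.1 p.1.2) ∧
  (∀ p ∈ T, ∀ q ∈ T, p.1 = q.1 → p.2 = q.2)

/-- `G` admits the tower `T` if `T` is a tower all of whose signatures lie in `G`. -/
def AdmitsTower (G : Subgroup PermR) (T : Set ((ℝ × ℝ) × PermR)) : Prop :=
  IsTower T ∧ ∀ p ∈ T, p.2 ∈ G

def AdmitsInfiniteTower (G : Subgroup PermR) : Prop :=
  ∃ T : Set ((ℝ × ℝ) × PermR), AdmitsTower G T ∧ T.Infinite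

/-- The set of breakpoints of the elements of a set `S`. -/
def BreakSet (S : Set PermR) : Set ℝ := ⋃ g ∈ S, Breakpoints g

/-- The derived length of a group: the least `n` with `derivedSeries G n = ⊥`. -/
noncomputable def derivedLength (G : Type*) [Group G] : ℕ :=
  sInf {n : ℕ | derivedSeries G n = ⊥}

/-- `g` is the one-bump factor of `f` over the orbital `(a,b)` of `f`:
`g` agrees with `f` on `(a,b)` and is the identity elsewhere. -/
def IsOneBumpFactor (g f : PermR) (a b : ℝ) : Prop :=
  IsOrbital f a b ∧ (∀ x ∈ Ioo a b, ap g x = ap f x) ∧ (∀ x ∉ Ioo a b, ap g x = x)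

/-- `g` is a one-bump factor of `f`. -/
def IsFactorOf (g f : PermR) : Prop := ∃ a b : ℝ, IsOneBumpFactor g f a b

/-- `((a,b), g)` is a factor signed orbital associated to (an element of) `G`. -/
def AssociatedFactor (G : Subgroup PermR) (a b : ℝ) (g : PermR) : Prop :=
  ∃ f ∈ G, IsOneBumpFactor g f a b

/-- The split group `S(G)`: the subgroup generated by the one-bump factors of
all elements of `G`. -/
def SplitGroup (G : Subgroup PermR) : Subgroup PermR :=
  Subgroup.closure {g : PermR | ∃ f ∈ G, IsFactorOf g f}

section Aux

open Filter Topology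
open scoped commutatorElement

/-! ### Basic facts on the action -/

theorem ap_mul (g h : PermR) (x : ℝ) : ap (g * h) x = ap h (ap g x) := rfl

theorem ap_one (x : ℝ) : ap 1 x = x := rfl

theorem ap_inv_ap (g : PermR) (x : ℝ) : ap g⁻¹ (ap g x) = x := by
  simp [ap]

theorem ap_ap_inv (g : PermR) (x : ℝ) : ap g (ap g⁻¹ x) = x := by
  simp [ap]

theorem ap_ext {g h : PermR} (H : ∀ x, ap g x = ap h x) : g = h := by
  apply MulOpposite.unop_injective
  ext x
  exact H x

theorem ap_inj (g : PermR) {x y : ℝ} (h : ap g x = ap g y) : x = y := by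
  rw [← ap_inv_ap g x, h, ap_inv_ap]

theorem ap_inv_fix {g : PermR} {x : ℝ} (h : ap g x = x) : ap g⁻¹ x = x := by
  apply ap_inj g
  rw [ap_ap_inv, h]

theorem ap_comm (x y : PermR) (t : ℝ) :
    ap ⁅x, y⁆ t = ap y⁻¹ (ap x⁻¹ (ap y (ap x t))) := rfl

theorem ap_zpow_succ (g : PermR) (k : ℤ) (x : ℝ) : ap (g ^ (k + 1)) x = ap g (ap (g ^ k) x) := by
  rw [zpow_add_one, ap_mul]

theorem ap_zpow_neg (g : PermR) (k : ℤ) (x : ℝ) : ap (g ^ (-k)) (ap (g ^ k) x) = x := by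
  rw [zpow_neg, ap_inv_ap]

theorem fix_zpow {g : PermR} {x : ℝ} (h : ap g x = x) (k : ℤ) : ap (g ^ k) x = x := by
  induction k using Int.induction_on with
  | zero => simp [ap_one]
  | succ i ih => rw [zpow_add_one, ap_mul, ih, h]
  | pred i ih => rw [zpow_sub_one, ap_mul, ih, ap_inv_fix h]

theorem sm_inv {g : PermR} (h : StrictMono (ap g)) : StrictMono (ap g⁻¹) := by
  intro x y hxy
  by_contra hc
  have := h.monotone (not_lt.1 hc)
  rw [ap_ap_inv, ap_ap_inv] at this
  linarith

theorem sm_mul {g f : PermR} (h : StrictMono (ap g)) (h' : StrictMono (ap f)) :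
    StrictMono (ap (g * f)) := fun x y hxy => by
  rw [ap_mul, ap_mul]
  exact h' (h hxy)

theorem sm_one : StrictMono (ap 1) := fun _ _ hxy => hxy

theorem sm_zpow {g : PermR} (h : StrictMono (ap g)) (k : ℤ) : StrictMono (ap (g ^ k)) := by
  induction k using Int.induction_on with
  | zero => simpa using sm_one
  | succ i ih => rw [zpow_add_one]; exact sm_mul ih h
  | pred i ih => rw [zpow_sub_one]; exact sm_mul ih (sm_inv h)

theorem cont_ap {g : PermR} (h : StrictMono (ap g)) : Continuous (ap g) :=
  h.monotone.continuous_of_surjective (fun y => ⟨ap g⁻¹ y, ap_ap_inv g y⟩)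

theorem fixed_of_not_supp {g : PermR} {x : ℝ} (h : x ∉ Supp g) : ap g x = x := by
  by_contra hc
  exact h hc

theorem IsOrbital.fl {g : PermR} {a b : ℝ} (h : IsOrbital g a b) : ap g a = a :=
  fixed_of_not_supp h.2.2.1

theorem IsOrbital.fr {g : PermR} {a b : ℝ} (h : IsOrbital g a b) : ap g b = b :=
  fixed_of_not_supp h.2.2.2

theorem IsOrbital.moves {g : PermR} {a b x : ℝ} (h : IsOrbital g a b) (h1 : a < x) (h2 : x < b) :
    ap g x ≠ x := h.2.1 ⟨h1, h2⟩

/-- A fixed point lies outside the orbital. -/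
theorem IsOrbital.out {g : PermR} {a b x : ℝ} (h : IsOrbital g a b) (hx : ap g x = x) :
    x ≤ a ∨ b ≤ x := by
  by_contra hc
  push Not at hc
  exact h.moves hc.1 hc.2 hx

theorem IsOrbital.congr {g f : PermR} {a b : ℝ} (h : IsOrbital f a b)
    (H : ∀ x ∈ Icc a b, ap g x = ap f x) : IsOrbital g a b := by
  refine ⟨h.1, fun x hx => ?_, ?_, ?_⟩
  · have := h.moves hx.1 hx.2
    show ap g x ≠ x
    rwa [H x ⟨hx.1.le, hx.2.le⟩]
  · simp [Supp, H a ⟨le_rfl, h.1.le⟩, h.fl]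
  · simp [Supp, H b ⟨h.1.le, le_rfl⟩, h.fr]

theorem IsOrbital.conj {f h : PermR} {a b : ℝ} (H : IsOrbital f a b) (hh : StrictMono (ap h)) :
    IsOrbital (h⁻¹ * f * h) (ap h a) (ap h b) := by
  refine ⟨hh H.1, fun x hx => ?_, ?_, ?_⟩
  · have h1 : a < ap h⁻¹ x := by
      have := sm_inv hh hx.1
      rwa [ap_inv_ap] at this
    have h2 : ap h⁻¹ x < b := by
      have := sm_inv hh hx.2
      rwa [ap_inv_ap] at this
    intro hc
    apply H.moves h1 h2
    rw [ap_mul, ap_mul] at hc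
    apply ap_inj h
    rw [hc, ap_ap_inv]
  · simp [Supp, ap_mul, ap_inv_ap, H.fl]
  · simp [Supp, ap_mul, ap_inv_ap, H.fr]

/-- Orbits inside an orbital go arbitrarily far right. -/
theorem IsOrbital.up {f : PermR} {a b : ℝ} (H : IsOrbital f a b) (hf : StrictMono (ap f))
    {p q : ℝ} (hp : p ∈ Ioo a b) (hq : q < b) : ∃ k : ℤ, q < ap (f ^ k) p ∧ ap (f ^ k) p < b := by
  by_contra hc
  push Not at hc
  have hb : ∀ k : ℤ, ap (f ^ k) p < b := fun k => by
    have := sm_zpow hf k hp.2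
    rwa [fix_zpow H.fr] at this
  have hq' : ∀ k : ℤ, ap (f ^ k) p ≤ q := fun k => by
    by_contra h
    exact absurd (hb k) (not_lt.2 (hc k (not_le.1 h)))
  set S : Set ℝ := range (fun k : ℤ => ap (f ^ k) p) with hS
  have hbd : BddAbove S := ⟨q, by rintro _ ⟨k, rfl⟩; exact hq' k⟩
  have hne : S.Nonempty := ⟨_, ⟨0, rfl⟩⟩
  have hL := isLUB_csSup hne hbd
  set L := sSup S
  have h1 : p ≤ L := hL.1 ⟨0, by simp [ap_one]⟩
  have h2 : L ≤ q := hL.2 (by rintro _ ⟨k, rfl⟩; exact hq' k)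
  have h3 : L ≤ ap f L := by
    apply hL.2
    rintro _ ⟨k, rfl⟩
    have : ap (f ^ k) p = ap f (ap (f ^ (k - 1)) p) := by
      rw [← ap_zpow_succ]; simp
    show ap (f ^ k) p ≤ _
    rw [this]
    exact hf.monotone (hL.1 ⟨k - 1, rfl⟩)
  have h4 : ap f L ≤ L := by
    have : L ≤ ap f⁻¹ L := by
      apply hL.2
      rintro _ ⟨k, rfl⟩
      have : ap (f ^ k) p = ap f⁻¹ (ap (f ^ (k + 1)) p) := by
        rw [ap_zpow_succ, ap_inv_ap]
      show ap (f ^ k) p ≤ _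
      rw [this]
      exact (sm_inv hf).monotone (hL.1 ⟨k + 1, rfl⟩)
    have := hf.monotone this
    rwa [ap_ap_inv] at this
  exact H.moves (x := L) (by linarith [hp.1]) (by linarith) (le_antisymm h4 h3)

theorem IsOrbital.down {f : PermR} {a b : ℝ} (H : IsOrbital f a b) (hf : StrictMono (ap f))
    {p q : ℝ} (hp : p ∈ Ioo a b) (hq : a < q) : ∃ k : ℤ, ap (f ^ k) p < q ∧ a < ap (f ^ k) p := by
  have ha : ∀ k : ℤ, a < ap (f ^ k) p := fun k => by
    have := sm_zpow hf k hp.1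
    rwa [fix_zpow H.fl] at this
  by_cases hqb : q < b
  · obtain ⟨k, hk, -⟩ := H.up hf (p := q) (q := p) ⟨hq, hqb⟩ hp.2
    refine ⟨-k, ?_, ha _⟩
    have := sm_zpow hf (-k) hk
    rwa [ap_zpow_neg] at this
  · refine ⟨0, ?_, ha _⟩
    simp only [zpow_zero, ap_one]
    linarith [hp.2]

/-- Every moved point lies in an orbital. -/
theorem exists_orbital {f : PermR} (hf : IsPL f) {x : ℝ} (hx : ap f x ≠ x) :
    ∃ a b, IsOrbital f a b ∧ a < x ∧ x < b := by
  have hcl : IsClosed {y | ap f y = y} := isClosed_eq (cont_ap hf.1) continuous_id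
  have h0 : ap f 0 = 0 := hf.2.1 0 (by simp)
  have h1 : ap f 1 = 1 := hf.2.1 1 (by simp)
  have hx01 : x ∈ Ioo (0:ℝ) 1 := by
    by_contra h
    exact hx (hf.2.1 x h)
  have hA : IsClosed ({y | ap f y = y} ∩ Iic x) := hcl.inter isClosed_Iic
  have hB : IsClosed ({y | ap f y = y} ∩ Ici x) := hcl.inter isClosed_Ici
  have bA : BddAbove ({y | ap f y = y} ∩ Iic x) := ⟨x, fun y hy => hy.2⟩
  have bB : BddBelow ({y | ap f y = y} ∩ Ici x) := ⟨x, fun y hy => hy.2⟩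
  have mA := hA.csSup_mem ⟨0, h0, hx01.1.le⟩ bA
  have mB := hB.csInf_mem ⟨1, h1, hx01.2.le⟩ bB
  set a := sSup ({y | ap f y = y} ∩ Iic x)
  set b := sInf ({y | ap f y = y} ∩ Ici x)
  have hax : a < x := lt_of_le_of_ne mA.2 (fun h => hx (h ▸ mA.1))
  have hxb : x < b := lt_of_le_of_ne mB.2 (fun h => hx (h ▸ mB.1))
  refine ⟨a, b, ⟨hax.trans hxb, fun y hy hc => ?_, fun h => h mA.1, fun h => h mB.1⟩, hax, hxb⟩
  rcases le_total y x with h | h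
  · exact absurd hy.1 (not_lt.2 (le_csSup bA ⟨hc, h⟩))
  · exact absurd hy.2 (not_lt.2 (csInf_le bB ⟨hc, h⟩))

/-! ### Germs -/


/-- Locally affine on an open interval implies affine. -/
theorem affine_on_Ioo {f : PermR} {u v : ℝ} (h : ∀ x ∈ Ioo u v, IsLocallyAffineAt f x) (huv : u < v) :
    ∃ m c : ℝ, ∀ x ∈ Ioo u v, ap f x = m * x + c := by
  obtain ⟨x0, hx0⟩ : (Ioo u v).Nonempty := nonempty_Ioo.2 huv
  obtain ⟨m, c, hm⟩ := h x0 hx0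
  refine ⟨m, c, ?_⟩
  set T : Set ℝ := {x | ∀ᶠ y in 𝓝 x, ap f y = m * y + c} with hT
  have hopen : IsOpen T := isOpen_setOfPred_eventually_nhds
  have hsub : Ioo u v ⊆ T := by
    apply isPreconnected_Ioo.subset_of_closure_inter_subset hopen ⟨x0, hx0, hm⟩
    rintro x ⟨hxc, hxI⟩
    obtain ⟨m', c', hm'⟩ := h x hxI
    have hev : ∀ᶠ y in 𝓝 x, ∀ᶠ z in 𝓝 y, ap f z = m' * z + c' := eventually_eventually_nhds.2 hm'
    obtain ⟨y, hyT, hy⟩ : ∃ y, y ∈ T ∧ ∀ᶠ z in 𝓝 y, ap f z = m' * z + c' := by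
      obtain ⟨y, h1, h2⟩ := (mem_closure_iff_frequently.1 hxc).and_eventually hev |>.exists
      exact ⟨y, h1, h2⟩
    have hboth : ∀ᶠ z in 𝓝 y, m * z + c = m' * z + c' := by
      filter_upwards [hyT, hy] with z h1 h2
      rw [← h1, h2]
    obtain ⟨z, hz, hzy⟩ : ∃ z, m * z + c = m' * z + c' ∧ y < z := by
      have : ∃ᶠ z in 𝓝[>] y, True := frequently_true_iff_neBot _ |>.2 inferInstance
      obtain ⟨z, ⟨-, h1⟩, h2⟩ := ((this.and_eventually (hboth.filter_mono nhdsWithin_le_nhds)).and_eventually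
        self_mem_nhdsWithin).exists
      exact ⟨z, h1, h2⟩
    have hy0 := hboth.self_of_nhds
    have hmm : m = m' := by
      have h3 : (m - m') * (z - y) = 0 := by linear_combination hz - hy0
      rcases mul_eq_zero.1 h3 with h | h <;> linarith
    subst hmm
    have hcc : c = c' := by linarith
    subst hcc
    exact hm'
  exact fun x hx => (hsub hx).self_of_nhds

theorem affine_near {f : PermR} (hf : IsPL f) (p : ℝ) :
    (∃ m c : ℝ, ∀ᶠ x in 𝓝[>] p, ap f x = m * x + c) ∧
    (∃ m c : ℝ, ∀ᶠ x in 𝓝[<] p, ap f x = m * x + c) := by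
  have hfin := hf.2.2
  have hne : ∀ᶠ x in 𝓝[≠] p, x ∉ insert (0:ℝ) (insert 1 (Breakpoints f)) := by
    have hF : (insert (0:ℝ) (insert 1 (Breakpoints f)) \ {p}).Finite :=
      ((hfin.insert 1).insert 0).sdiff
    have := hF.isClosed.isOpen_compl.mem_nhds (x := p) (by simp)
    rw [eventually_nhdsWithin_iff]
    filter_upwards [this] with x hx hxp hx'
    exact hx ⟨hx', hxp⟩
  have hla : ∀ x, x ∉ insert (0:ℝ) (insert 1 (Breakpoints f)) → IsLocallyAffineAt f x := by
    intro x hx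
    simp only [mem_insert_iff, not_or] at hx
    by_contra hc
    by_cases h01 : x ∈ Ioo (0:ℝ) 1
    · exact hx.2.2 ⟨h01, hc⟩
    · apply hc
      refine ⟨1, 0, ?_⟩
      have : x ∉ Icc (0:ℝ) 1 := fun h =>
        h01 ⟨lt_of_le_of_ne h.1 (Ne.symm hx.1), lt_of_le_of_ne h.2 hx.2.1⟩
      filter_upwards [isClosed_Icc.isOpen_compl.mem_nhds this] with y hy
      rw [hf.2.1 y (fun h => hy (Ioo_subset_Icc_self h))]
      ring
  constructor
  · have h := hne.filter_mono (nhdsWithin_mono p (s := Ioi p) (fun x hx => ne_of_gt hx))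
    obtain ⟨v, hv, hs⟩ := mem_nhdsGT_iff_exists_Ioo_subset.1 h
    obtain ⟨m, c, hm⟩ := affine_on_Ioo (fun x hx => hla x (hs hx)) hv
    exact ⟨m, c, mem_of_superset (Ioo_mem_nhdsGT hv) hm⟩
  · have h := hne.filter_mono (nhdsWithin_mono p (s := Iio p) (fun x hx => ne_of_lt hx))
    obtain ⟨v, hv, hs⟩ := mem_nhdsLT_iff_exists_Ioo_subset.1 h
    obtain ⟨m, c, hm⟩ := affine_on_Ioo (fun x hx => hla x (hs hx)) hv
    exact ⟨m, c, mem_of_superset (Ioo_mem_nhdsLT hv) hm⟩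

theorem affine_lim {f : PermR} (hf : StrictMono (ap f)) {p m c : ℝ} {l : Filter ℝ} [l.NeBot]
    (hl : l ≤ 𝓝 p) (h : ∀ᶠ x in l, ap f x = m * x + c) : ap f p = m * p + c := by
  have h1 : Tendsto (ap f) l (𝓝 (ap f p)) := ((cont_ap hf).tendsto p).mono_left hl
  have h2 : Tendsto (fun x => m * x + c) l (𝓝 (m * p + c)) :=
    ((by fun_prop : Continuous fun x : ℝ => m * x + c).tendsto p).mono_left hl
  exact tendsto_nhds_unique h1 (h2.congr' (h.mono fun x hx => hx.symm))

theorem germ_id_aux {f : PermR} (hf : StrictMono (ap f)) {p m c : ℝ} {l : Filter ℝ} [l.NeBot]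
    (hl : l ≤ 𝓝 p) (hlp : ∀ᶠ x in l, x ≠ p) (h : ∀ᶠ x in l, ap f x = m * x + c) (hp : ap f p = p)
    (hfr : ∃ᶠ x in l, ap f x = x) : ∀ᶠ x in l, ap f x = x := by
  have h0 := affine_lim hf hl h
  obtain ⟨x, ⟨h1, h2⟩, h3⟩ := ((hfr.and_eventually h).and_eventually hlp).exists
  have : (m - 1) * (x - p) = 0 := by linear_combination h1 - h2 + h0 - hp
  have hm : m = 1 := by
    rcases mul_eq_zero.1 this with h | h
    · linarith
    · exact absurd (by linarith) h3
  subst hm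
  filter_upwards [h] with y hy
  linarith

theorem germ_right {f : PermR} (hf : IsPL f) {p : ℝ} (hp : ap f p = p)
    (hfr : ∃ᶠ x in 𝓝[>] p, ap f x = x) : ∀ᶠ x in 𝓝[>] p, ap f x = x := by
  obtain ⟨m, c, h⟩ := (affine_near hf p).1
  exact germ_id_aux hf.1 nhdsWithin_le_nhds
    (by filter_upwards [self_mem_nhdsWithin] with x hx using ne_of_gt hx) h hp hfr

theorem germ_left {f : PermR} (hf : IsPL f) {p : ℝ} (hp : ap f p = p)
    (hfr : ∃ᶠ x in 𝓝[<] p, ap f x = x) : ∀ᶠ x in 𝓝[<] p, ap f x = x := by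
  obtain ⟨m, c, h⟩ := (affine_near hf p).2
  exact germ_id_aux hf.1 nhdsWithin_le_nhds
    (by filter_upwards [self_mem_nhdsWithin] with x hx using ne_of_lt hx) h hp hfr

theorem tendsto_right {f : PermR} (hf : StrictMono (ap f)) {p : ℝ} (hp : ap f p = p) :
    Tendsto (ap f) (𝓝[>] p) (𝓝[>] p) := by
  apply tendsto_nhdsWithin_iff.2
  constructor
  · have := (cont_ap hf).tendsto p
    rw [hp] at this
    exact this.mono_left nhdsWithin_le_nhds
  · filter_upwards [self_mem_nhdsWithin] with x hx
    have := hf hx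
    rwa [hp] at this

theorem germ_comm {f n : PermR} (hf : IsPL f) (hn : IsPL n) {p : ℝ} (hp : ap f p = p)
    (hp' : ap n p = p) : ∀ᶠ x in 𝓝[>] p, ap ⁅n, f⁆ x = x := by
  obtain ⟨m, c, h⟩ := (affine_near hf p).1
  obtain ⟨m', c', h'⟩ := (affine_near hn p).1
  have e1 := affine_lim hf.1 nhdsWithin_le_nhds h
  have e2 := affine_lim hn.1 nhdsWithin_le_nhds h'
  filter_upwards [h, h', (tendsto_right hf.1 hp).eventually h', (tendsto_right hn.1 hp').eventually h]
    with x h1 h2 h3 h4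
  have : ap f (ap n x) = ap n (ap f x) := by
    rw [h4, h3, h1, h2]
    rw [hp] at e1
    rw [hp'] at e2
    have hc : c = p - m * p := by linarith
    have hc' : c' = p - m' * p := by linarith
    rw [hc, hc']; ring
  rw [ap_comm, this, ap_inv_ap, ap_inv_ap]

/-! ### Overlaps -/

/-- No bad overlaps, as order relations between endpoints. -/
def NBO (G : Subgroup PermR) : Prop :=
  ∀ f ∈ G, ∀ g ∈ G, ∀ a b c d : ℝ, IsOrbital f a b → IsOrbital g c d →
    (b ≤ c ∨ d ≤ a) ∨ (a = c ∧ b = d) ∨ (a < c ∧ d < b) ∨ (c < a ∧ b < d)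

/-- The derived series, inside the ambient group. -/
def DS : ℕ → Subgroup PermR → Subgroup PermR
  | 0, G => G
  | n + 1, G => DS n ⁅G, G⁆

theorem comm_le (G : Subgroup PermR) : ⁅G, G⁆ ≤ G := by
  rw [Subgroup.commutator_le]
  intro x hx y hy
  exact G.mul_mem (G.mul_mem (G.mul_mem hx hy) (G.inv_mem hx)) (G.inv_mem hy)

theorem conj_mem_comm {G : Subgroup PermR} {n h : PermR} (hn : n ∈ ⁅G, G⁆) (hh : h ∈ G) :
    h⁻¹ * n * h ∈ ⁅G, G⁆ := by
  have h1 : ⁅n⁻¹, h⁻¹⁆ ∈ ⁅G, G⁆ := Subgroup.commutator_mem_commutator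
    (G.inv_mem (comm_le G hn)) (G.inv_mem hh)
  have : h⁻¹ * n * h = n * ⁅n⁻¹, h⁻¹⁆ := by
    rw [commutatorElement_def]; group
  rw [this]
  exact mul_mem hn h1

/-- If `f` is supported compactly inside the orbital `(u,v)` of `n`, then some commutator agrees
with `f` on the orbitals of `f` in `(u,v)`. -/
theorem compact_comm {f n : PermR} (hf : StrictMono (ap f)) (hn : StrictMono (ap n)) {u v : ℝ}
    (H : IsOrbital n u v) (h1 : ∀ᶠ x in 𝓝[>] u, ap f x = x) (h2 : ∀ᶠ x in 𝓝[<] v, ap f x = x) :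
    ∃ k : ℤ, ∀ a b, IsOrbital f a b → u ≤ a → b ≤ v → ∀ x ∈ Icc a b, ap ⁅f, n ^ k⁆ x = ap f x := by
  have huv := H.1
  obtain ⟨s, hs, hs'⟩ := mem_nhdsGT_iff_exists_Ioo_subset.1 h1
  obtain ⟨t, ht, ht'⟩ := mem_nhdsLT_iff_exists_Ioo_subset.1 h2
  have hs0 : u < s := hs
  have ht0 : t < v := ht
  obtain ⟨p, hp1, hp2⟩ := exists_between (lt_min hs0 huv)
  obtain ⟨q, hq1, hq2⟩ := exists_between (max_lt ht0 (hp2.trans_le (min_le_right _ _)))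
  have hps : p < s := hp2.trans_le (min_le_left _ _)
  have hpq : p < q := (le_max_right _ _).trans_lt hq1
  have htq : t < q := (le_max_left _ _).trans_lt hq1
  have idl : ∀ x, u < x → x ≤ p → ap f x = x := fun x hx hx' => hs' ⟨hx, by linarith⟩
  have idr : ∀ x, q ≤ x → x < v → ap f x = x := fun x hx hx' => ht' ⟨by linarith, hx'⟩
  obtain ⟨k, hk, -⟩ := H.up hn (p := p) (q := q) ⟨hp1, by linarith⟩ hq2
  refine ⟨k, fun a b hab hua hbv x hx => ?_⟩
  have hap : p ≤ a := by
    by_contra hc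
    obtain ⟨y, hy1, hy2⟩ := exists_between (lt_min (not_le.1 hc) hab.1)
    exact hab.moves hy1 (hy2.trans_le (min_le_right _ _))
      (idl y (by linarith) (hy2.le.trans (min_le_left _ _)))
  have hbq : b ≤ q := by
    by_contra hc
    obtain ⟨y, hy1, hy2⟩ := exists_between (max_lt (not_le.1 hc) hab.1)
    exact hab.moves ((le_max_right _ _).trans_lt hy1) hy2
      (idr y ((le_max_left _ _).trans hy1.le) (by linarith))
  have hy1 : p ≤ ap f x := by
    have := hf.monotone (show p ≤ x by linarith [hx.1])
    rwa [idl p hp1 le_rfl] at this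
  have hy2 : ap f x ≤ q := by
    have := hf.monotone (show x ≤ q by linarith [hx.2])
    rwa [idr q le_rfl hq2] at this
  have hz1 : q ≤ ap (n ^ k) (ap f x) := hk.le.trans ((sm_zpow hn k).monotone hy1)
  have hz2 : ap (n ^ k) (ap f x) < v := by
    have := sm_zpow hn k (show ap f x < v by linarith)
    rwa [fix_zpow H.fr] at this
  rw [ap_comm, ap_inv_fix (idr _ hz1 hz2), ap_inv_ap]

/-- With no bad overlaps, strictly nested orbitals come from the commutator subgroup. -/
theorem nested_comm {G : Subgroup PermR} (hG : ∀ g ∈ G, IsPL g) (hN : NBO G) {f g : PermR}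
    (hf : f ∈ G) (hg : g ∈ G) {a b c d : ℝ} (hab : IsOrbital f a b) (hcd : IsOrbital g c d)
    (hca : c < a) (hbd : b < d) : ∃ m ∈ ⁅G, G⁆, ∀ x ∈ Icc a b, ap m x = ap f x := by
  have hab0 := hab.1
  have key : ∀ u v, IsOrbital f u v → u ≤ a ∧ v ≤ a ∨ u = a ∧ v = b ∨ b ≤ u := by
    intro u v huv
    have := huv.1
    have h1 := huv.out hab.fl
    have h2 := huv.out hab.fr
    have h3 := hab.out huv.fl
    have h4 := hab.out huv.fr
    grind
  have hfc : ap f c = c := by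
    by_contra hc
    obtain ⟨u, v, huv, h1, h2⟩ := exists_orbital (hG f hf) hc
    have := hN f hf g hg u v c d huv hcd
    have := key u v huv
    grind
  have hfd : ap f d = d := by
    by_contra hc
    obtain ⟨u, v, huv, h1, h2⟩ := exists_orbital (hG f hf) hc
    have := hN f hf g hg u v c d huv hcd
    have := key u v huv
    grind
  have e1 : ∀ᶠ x in 𝓝[>] c, ap f x = x := by
    apply germ_right (hG f hf) hfc
    by_contra hc
    rw [not_frequently] at hc
    obtain ⟨s, hs, hs'⟩ := mem_nhdsGT_iff_exists_Ioo_subset.1 hc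
    have hs0 : c < s := hs
    obtain ⟨x, hx1, hx2⟩ := exists_between (lt_min hs0 hca)
    have hx3 := hx2.trans_le (min_le_left _ _)
    have hx4 := hx2.trans_le (min_le_right _ _)
    obtain ⟨u, v, huv, h1, h2⟩ := exists_orbital (hG f hf) (hs' ⟨hx1, hx3⟩)
    have hu : u = c := by
      rcases huv.out hfc with h | h
      · by_contra hne
        exact hs' ⟨lt_of_le_of_ne h (Ne.symm hne), by linarith⟩ huv.fl
      · linarith
    have := hN f hf g hg u v c d huv hcd
    have := key u v huv
    grind
  have e2 : ∀ᶠ x in 𝓝[<] d, ap f x = x := by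
    apply germ_left (hG f hf) hfd
    by_contra hc
    rw [not_frequently] at hc
    obtain ⟨s, hs, hs'⟩ := mem_nhdsLT_iff_exists_Ioo_subset.1 hc
    have hs0 : s < d := hs
    obtain ⟨x, hx1, hx2⟩ := exists_between (max_lt hs0 hbd)
    have hx3 := (le_max_left _ _).trans_lt hx1
    have hx4 := (le_max_right _ _).trans_lt hx1
    obtain ⟨u, v, huv, h1, h2⟩ := exists_orbital (hG f hf) (hs' ⟨hx3, hx2⟩)
    have hv : v = d := by
      rcases huv.out hfd with h | h
      · linarith
      · by_contra hne
        exact hs' ⟨by linarith, lt_of_le_of_ne h hne⟩ huv.fr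
    have := hN f hf g hg u v c d huv hcd
    have := key u v huv
    grind
  obtain ⟨k, hk⟩ := compact_comm (hG f hf).1 (hG g hg).1 hcd e1 e2
  exact ⟨_, Subgroup.commutator_mem_commutator hf (G.zpow_mem hg k), hk a b hab hca.le hbd.le⟩

theorem NBO.mono {G K : Subgroup PermR} (h : NBO G) (hK : K ≤ G) : NBO K :=
  fun f hf g hg => h f (hK hf) g (hK hg)

/-- No long towers in a soluble group with no bad overlaps. -/
theorem no_tower (n : ℕ) : ∀ (G : Subgroup PermR), (∀ g ∈ G, IsPL g) → NBO G → DS n G = ⊥ →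
    ∀ E : ℕ → ℝ × ℝ, (∀ i ≤ n, ∃ f ∈ G, IsOrbital f (E i).1 (E i).2) →
    (∀ i < n, (E (i+1)).1 < (E i).1 ∧ (E i).2 < (E (i+1)).2) → False := by
  induction n with
  | zero =>
    intro G _ _ hD E hE _
    obtain ⟨f, hf, ho⟩ := hE 0 le_rfl
    have hD' : G = ⊥ := hD
    rw [hD', Subgroup.mem_bot] at hf
    subst hf
    obtain ⟨x, hx, hx'⟩ := exists_between ho.1
    exact ho.moves hx hx' (ap_one x)
  | succ n ih =>
    intro G hG hN hD E hE hs
    refine ih ⁅G, G⁆ (fun g hg => hG g (comm_le G hg)) (hN.mono (comm_le G)) hD E ?_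
      (fun i hi => hs i (by omega))
    intro i hi
    obtain ⟨f, hf, ho⟩ := hE i (by omega)
    obtain ⟨g, hg, ho'⟩ := hE (i+1) (by omega)
    obtain ⟨h1, h2⟩ := hs i (by omega)
    obtain ⟨m, hm, hmm⟩ := nested_comm hG hN hf hg ho ho' h1 h2
    exact ⟨m, hm, ho.congr hmm⟩

section Step

variable {G : Subgroup PermR} {n : ℕ}

theorem no_expand (hG : ∀ g ∈ G, IsPL g) (hN : NBO ⁅G, G⁆) (hD : DS n ⁅G, G⁆ = ⊥) {f h : PermR}
    (hf : f ∈ ⁅G, G⁆) (hh : h ∈ G) {a b : ℝ} (ho : IsOrbital f a b) (h1 : ap h a < a)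
    (h2 : b < ap h b) : False := by
  apply no_tower n ⁅G, G⁆ (fun g hg => hG g (comm_le G hg)) hN hD
    (fun i => (ap (h ^ (i:ℤ)) a, ap (h ^ (i:ℤ)) b))
  · intro i _
    exact ⟨_, conj_mem_comm hf (G.zpow_mem hh i), ho.conj (sm_zpow (hG h hh).1 i)⟩
  · intro i _
    have e : ∀ x, ap (h ^ ((i+1 : ℕ):ℤ)) x = ap (h ^ (i:ℤ)) (ap h x) := by
      intro x
      rw [← ap_mul, ← zpow_one_add]
      push_cast
      rw [add_comm]
    simp only [e]
    exact ⟨sm_zpow (hG h hh).1 i h1, sm_zpow (hG h hh).1 i h2⟩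

theorem stable (hG : ∀ g ∈ G, IsPL g) (hN : NBO ⁅G, G⁆) (hD : DS n ⁅G, G⁆ = ⊥) {f h : PermR}
    (hf : f ∈ ⁅G, G⁆) (hh : h ∈ G) {a b p : ℝ} (ho : IsOrbital f a b) (hap : a < p) (hpb : p < b)
    (hp : ap h p = p) : ap h a = a ∧ ap h b = b := by
  have hs := (hG h hh).1
  have ho' := ho.conj hs
  have h1 : ap h a < p := by have := hs hap; rwa [hp] at this
  have h2 : p < ap h b := by have := hs hpb; rwa [hp] at this
  rcases hN _ (conj_mem_comm hf hh) f hf _ _ _ _ ho' ho with h | h | h | h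
  · rcases h with h | h <;> linarith
  · exact h
  · exact (no_expand hG hN hD hf hh ho h.1 h.2).elim
  · have h3 := sm_inv hs h.1
    have h4 := sm_inv hs h.2
    rw [ap_inv_ap] at h3 h4
    exact (no_expand hG hN hD hf (G.inv_mem hh) ho h3 h4).elim

theorem exists_min (hG : ∀ g ∈ G, IsPL g) (hN : NBO ⁅G, G⁆) (hD : DS n ⁅G, G⁆ = ⊥) {f : PermR}
    (hf : f ∈ ⁅G, G⁆) {p : ℝ} (hp : ap f p ≠ p) :
    ∃ m ∈ ⁅G, G⁆, ∃ u v, IsOrbital m u v ∧ u < p ∧ p < v ∧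
      ∀ m' ∈ ⁅G, G⁆, ∀ u' v', IsOrbital m' u' v' → u' < p → p < v' → u' ≤ u ∧ v ≤ v' := by
  set P : ℝ × ℝ → Prop := fun e => (∃ m ∈ ⁅G, G⁆, IsOrbital m e.1 e.2) ∧ e.1 < p ∧ p < e.2 with hP
  have wf : WellFounded (fun x y : ℝ × ℝ => P x ∧ y.1 < x.1 ∧ x.2 < y.2) := by
    rw [wellFounded_iff_isEmpty_descending_chain]
    refine ⟨fun ⟨F, hF⟩ => ?_⟩
    apply no_tower n ⁅G, G⁆ (fun g hg => hG g (comm_le G hg)) hN hD (fun i => F (n + 1 - i))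
    · intro i hi
      have := hF (n - i)
      rw [show n - i + 1 = n + 1 - i by omega] at this
      exact this.1.1
    · intro i hi
      have := hF (n - i)
      rw [show n - i + 1 = n + 1 - i by omega] at this
      show (F (n + 1 - (i + 1))).1 < _ ∧ _ < (F (n + 1 - (i + 1))).2
      rw [show n + 1 - (i + 1) = n - i by omega]
      exact this.2
  obtain ⟨a, b, hab, h1, h2⟩ := exists_orbital (hG f (comm_le G hf)) hp
  obtain ⟨⟨u, v⟩, ⟨⟨m, hm, ho⟩, hu, hv⟩, hmin⟩ := wf.has_min {e | P e} ⟨(a, b), ⟨f, hf, hab⟩, h1, h2⟩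
  refine ⟨m, hm, u, v, ho, hu, hv, fun m' hm' u' v' ho' hu' hv' => ?_⟩
  have := hmin (u', v') ⟨⟨m', hm', ho'⟩, hu', hv'⟩
  have h3 : ¬ (u < u' ∧ v' < v) := fun h => this ⟨⟨⟨m', hm', ho'⟩, hu', hv'⟩, h⟩
  have := hN m hm m' hm' u v u' v' ho ho'
  simp only at hu hv
  grind

theorem germs_id (hG : ∀ g ∈ G, IsPL g) {f m : PermR} (hf : f ∈ G)
    (hm : m ∈ ⁅G, G⁆) {p u v : ℝ} (ho : IsOrbital m u v) (hu : u < p) (hv : p < v)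
    (hmin : ∀ m' ∈ ⁅G, G⁆, ∀ u' v', IsOrbital m' u' v' → u' < p → p < v' → u' ≤ u ∧ v ≤ v')
    (hp : ap f p = p) (hfu : ap f u = u) (hfv : ap f v = v) :
    (∀ᶠ x in 𝓝[>] u, ap f x = x) ∧ (∀ᶠ x in 𝓝[<] v, ap f x = x) := by
  have hmG := comm_le G hm
  have hms := (hG m hmG).1
  have key : ∀ k : ℤ, ap f (ap (m ^ k) p) = ap (m ^ k) p := by
    intro k
    have hkG := G.zpow_mem hmG k
    have hc : ⁅m ^ k, f⁆ ∈ ⁅G, G⁆ := Subgroup.commutator_mem_commutator hkG hf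
    by_cases h : ap ⁅m ^ k, f⁆ p = p
    · rw [ap_comm] at h
      have h1 := congrArg (ap (m ^ k)) (congrArg (ap f) h)
      rwa [ap_ap_inv, ap_ap_inv, hp] at h1
    · exfalso
      obtain ⟨u', v', ho', hu', hv'⟩ := exists_orbital (hG _ (comm_le G hc)) h
      obtain ⟨h1, h2⟩ := hmin _ hc _ _ ho' hu' hv'
      have hg := germ_comm (hG f hf) (hG _ hkG) hfu (fix_zpow ho.fl k)
      obtain ⟨s, hs, hs'⟩ := mem_nhdsGT_iff_exists_Ioo_subset.1 hg
      obtain ⟨x, hx1, hx2⟩ := exists_between (lt_min (show u < s from hs) hu)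
      exact ho'.moves (by linarith) (by linarith [hx2.trans_le (min_le_right _ _)])
        (hs' ⟨hx1, hx2.trans_le (min_le_left _ _)⟩)
  constructor
  · apply germ_right (hG f hf) hfu
    intro hc
    obtain ⟨s, hs, hs'⟩ := mem_nhdsGT_iff_exists_Ioo_subset.1 hc
    obtain ⟨k, h1, h2⟩ := ho.down hms ⟨hu, hv⟩ hs
    exact hs' ⟨h2, h1⟩ (key k)
  · apply germ_left (hG f hf) hfv
    intro hc
    obtain ⟨s, hs, hs'⟩ := mem_nhdsLT_iff_exists_Ioo_subset.1 hc
    obtain ⟨k, h1, h2⟩ := ho.up hms ⟨hu, hv⟩ hs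
    exact hs' ⟨h1, h2⟩ (key k)

theorem core (hG : ∀ g ∈ G, IsPL g) (hN : NBO ⁅G, G⁆) (hD : DS n ⁅G, G⁆ = ⊥) {f g : PermR}
    (hf : f ∈ G) (hg : g ∈ G) {a b c d p r : ℝ} (hab : IsOrbital f a b) (hcd : IsOrbital g c d)
    (H : (p = b ∧ r = c ∧ a ≤ c ∧ c < b ∧ b < d) ∨ (p = a ∧ r = d ∧ c < a ∧ a < d ∧ d ≤ b)) :
    False := by
  have hab0 := hab.1
  have hcd0 := hcd.1
  have hgs := (hG g hg).1
  have hfp : ap f p = p := by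
    rcases H with H | H <;> rw [H.1]
    exacts [hab.fr, hab.fl]
  have hgr : ap g r = r := by
    rcases H with H | H <;> rw [H.2.1]
    exacts [hcd.fl, hcd.fr]
  obtain ⟨k, hk1, hk2⟩ : ∃ k : ℤ, a < ap (g ^ k) p ∧ ap (g ^ k) p < b := by
    rcases H with ⟨rfl, rfl, h1, h2, h3⟩ | ⟨rfl, rfl, h1, h2, h3⟩
    · obtain ⟨k, h4, h5⟩ := hcd.down hgs (p := p) (q := p) ⟨h2, h3⟩ h2
      exact ⟨k, by linarith, h4⟩
    · obtain ⟨k, h4, h5⟩ := hcd.up hgs (p := p) (q := p) ⟨h1, h2⟩ h2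
      exact ⟨k, h4, by linarith⟩
  obtain ⟨n0, hn0, hn0p⟩ : ∃ n0 ∈ ⁅G, G⁆, ap n0 p ≠ p := by
    refine ⟨⁅g ^ k, f⁆, Subgroup.commutator_mem_commutator (G.zpow_mem hg k) hf, fun h => ?_⟩
    rw [ap_comm] at h
    have h1 := congrArg (ap (g ^ k)) (congrArg (ap f) h)
    rw [ap_ap_inv, ap_ap_inv, hfp] at h1
    exact hab.moves hk1 hk2 h1
  obtain ⟨m, hm, u, v, ho, hu, hv, hmin⟩ := exists_min hG hN hD hn0 hn0p
  obtain ⟨hfu, hfv⟩ := stable hG hN hD hm hf ho hu hv hfp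
  obtain ⟨f1, f2⟩ := germs_id hG hf hm ho hu hv hmin hfp hfu hfv
  have o1 := hab.out hfu
  have o2 := hab.out hfv
  have hua : u < a := by
    have hle : u ≤ a := by grind
    rcases hle.lt_or_eq with h | h
    · exact h
    · exfalso
      obtain ⟨s, hs, hs'⟩ := mem_nhdsGT_iff_exists_Ioo_subset.1 f1
      obtain ⟨x, hx1, hx2⟩ := exists_between (lt_min (show u < s from hs) (h ▸ hab0))
      exact hab.moves (h ▸ hx1) (hx2.trans_le (min_le_right _ _))
        (hs' ⟨hx1, hx2.trans_le (min_le_left _ _)⟩)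
  have hbv : b < v := by
    have hle : b ≤ v := by grind
    rcases hle.lt_or_eq with h | h
    · exact h
    · exfalso
      obtain ⟨s, hs, hs'⟩ := mem_nhdsLT_iff_exists_Ioo_subset.1 f2
      obtain ⟨x, hx1, hx2⟩ := exists_between (max_lt (show s < v from hs) (h ▸ hab0))
      exact hab.moves ((le_max_right _ _).trans_lt hx1) (h ▸ hx2)
        (hs' ⟨(le_max_left _ _).trans_lt hx1, hx2⟩)
  have hur : u < r := by grind
  have hrv : r < v := by grind
  obtain ⟨hgu, hgv⟩ := stable hG hN hD hm hg ho hur hrv hgr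
  have hmin' : ∀ m' ∈ ⁅G, G⁆, ∀ u' v', IsOrbital m' u' v' → u' < r → r < v' → u' ≤ u ∧ v ≤ v' := by
    intro m' hm' u' v' ho' hu' hv'
    obtain ⟨h1, h2⟩ := stable hG hN hD hm' hg ho' hu' hv' hgr
    have o3 := hcd.out h1
    have o4 := hcd.out h2
    apply hmin m' hm' u' v' ho' <;> grind
  obtain ⟨g1, g2⟩ := germs_id hG hg hm ho hur hrv hmin' hgr hgu hgv
  have o3 := hcd.out hgu
  have o4 := hcd.out hgv
  have huc : u ≤ c := by grind
  have hdv : d ≤ v := by grind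
  have hmG := comm_le G hm
  obtain ⟨k1, hk1⟩ := compact_comm (hG f hf).1 (hG m hmG).1 ho f1 f2
  obtain ⟨k2, hk2⟩ := compact_comm (hG g hg).1 (hG m hmG).1 ho g1 g2
  have := hN _ (Subgroup.commutator_mem_commutator hf (G.zpow_mem hmG k1)) _
    (Subgroup.commutator_mem_commutator hg (G.zpow_mem hmG k2)) a b c d
    (hab.congr (hk1 a b hab hua.le hbv.le)) (hcd.congr (hk2 c d hcd huc hdv))
  grind

theorem nbo_step (hG : ∀ g ∈ G, IsPL g) (hN : NBO ⁅G, G⁆) (hD : DS n ⁅G, G⁆ = ⊥) : NBO G := by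
  intro f hf g hg a b c d hab hcd
  by_contra hc
  have hab0 := hab.1
  have hcd0 := hcd.1
  have h : (a ≤ c ∧ c < b ∧ b < d) ∨ (c < a ∧ a < d ∧ d ≤ b) ∨
      (c ≤ a ∧ a < d ∧ d < b) ∨ (a < c ∧ c < b ∧ b ≤ d) := by grind
  rcases h with h | h | h | h
  · exact core hG hN hD hf hg hab hcd (Or.inl ⟨rfl, rfl, h⟩)
  · exact core hG hN hD hf hg hab hcd (Or.inr ⟨rfl, rfl, h⟩)
  · exact core hG hN hD hg hf hcd hab (Or.inl ⟨rfl, rfl, h⟩)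
  · exact core hG hN hD hg hf hcd hab (Or.inr ⟨rfl, rfl, h⟩)

end Step

theorem nbo_of_DS (n : ℕ) : ∀ G : Subgroup PermR, (∀ g ∈ G, IsPL g) → DS n G = ⊥ → NBO G := by
  induction n with
  | zero =>
    intro G _ hD f hf g hg a b c d hab _
    have hD' : G = ⊥ := hD
    rw [hD', Subgroup.mem_bot] at hf
    subst hf
    obtain ⟨x, hx, hx'⟩ := exists_between hab.1
    exact (hab.moves hx hx' (ap_one x)).elim
  | succ n ih =>
    intro G hG hD
    exact nbo_step hG (ih _ (fun g hg => hG g (comm_le G hg)) hD) hD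

/-! ### The split group -/

/-- `x` is the restriction of `f` to `(a,b)`. -/
def IsRestr (x f : PermR) (a b : ℝ) : Prop :=
  (∀ t ∈ Ioo a b, ap x t = ap f t) ∧ (∀ t ∉ Ioo a b, ap x t = t)

theorem ap_mem_Ioo {f : PermR} (hf : StrictMono (ap f)) {a b t : ℝ} (ha : ap f a = a)
    (hb : ap f b = b) : ap f t ∈ Ioo a b ↔ t ∈ Ioo a b := by
  have h1 := hf.lt_iff_lt (a := a) (b := t)
  have h2 := hf.lt_iff_lt (a := t) (b := b)
  rw [ha] at h1
  rw [hb] at h2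
  simp only [mem_Ioo, h1, h2]

theorem exists_restr {f : PermR} (hf : StrictMono (ap f)) {a b : ℝ} (ha : ap f a = a)
    (hb : ap f b = b) : ∃ x, IsRestr x f a b := by
  classical
  refine ⟨MulOpposite.op (Equiv.Perm.ofSubtype (Equiv.Perm.subtypePerm (p := fun t => t ∈ Ioo a b)
    f.unop (fun t => ap_mem_Ioo hf ha hb))), fun t ht => ?_, fun t ht => ?_⟩
  · exact Equiv.Perm.ofSubtype_apply_of_mem _ ht
  · exact Equiv.Perm.ofSubtype_apply_of_not_mem _ ht

theorem mem_split {G : Subgroup PermR} {f x : PermR} {a b : ℝ} (hf : f ∈ G)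
    (ho : IsOrbital f a b) (hx : IsRestr x f a b) : x ∈ SplitGroup G :=
  Subgroup.subset_closure ⟨f, hf, a, b, ho, hx.1, hx.2⟩

/-- Restrictions between fixed points lie in the split group. -/
theorem restr_mem {G : Subgroup PermR} (hG : ∀ g ∈ G, IsPL g) {f : PermR} (hf : f ∈ G) {a b : ℝ}
    (hab : a ≤ b) (ha : ap f a = a) (hb : ap f b = b) {x : PermR} (hx : IsRestr x f a b) :
    x ∈ SplitGroup G := by
  have hPL := hG f hf
  set T : Set ℝ := {t | a ≤ t ∧ t ≤ b ∧ ap f t = t ∧ ∀ x, IsRestr x f a t → x ∈ SplitGroup G} with hT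
  have haT : a ∈ T := by
    refine ⟨le_rfl, hab, ha, fun x hx => ?_⟩
    have : x = 1 := ap_ext fun t => by rw [hx.2 t (by simp), ap_one]
    rw [this]
    exact one_mem _
  -- extension over an interval where `f` is the identity
  have ext_id : ∀ s t, s ∈ T → s ≤ t → t ≤ b → (∀ y, s < y → y ≤ t → ap f y = y) → t ∈ T := by
    intro s t hs hst htb hid
    have hft : ap f t = t := by
      rcases hst.lt_or_eq with h | h
      · exact hid t h le_rfl
      · rw [← h]; exact hs.2.2.1
    refine ⟨hs.1.trans hst, htb, hft, fun x hx => hs.2.2.2 x ⟨fun y hy => ?_, fun y hy => ?_⟩⟩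
    · exact hx.1 y ⟨hy.1, hy.2.trans_le hst⟩
    · by_cases h : y ∈ Ioo a t
      · rw [hx.1 y h]
        have : s ≤ y := by
          by_contra hc
          exact hy ⟨h.1, not_le.1 hc⟩
        rcases this.lt_or_eq with h' | h'
        · exact hid y h' h.2.le
        · rw [← h']; exact hs.2.2.1
      · exact hx.2 y h
  have hbdd : BddAbove T := ⟨b, fun t ht => ht.2.1⟩
  have hL := isLUB_csSup ⟨a, haT⟩ hbdd
  set s := sSup T
  have has : a ≤ s := hL.1 haT
  have hsb : s ≤ b := hL.2 (fun t ht => ht.2.1)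
  have hcl : IsClosed {y | ap f y = y} := isClosed_eq (cont_ap hPL.1) continuous_id
  have hfs : ap f s = s := by
    have h1 : s ∈ closure T := hL.mem_closure ⟨a, haT⟩
    exact closure_minimal (fun t ht => ht.2.2.1) hcl h1
  have hsT : s ∈ T := by
    by_contra hc
    have hfr : ∀ r < s, ∃ t ∈ T, r < t ∧ t < s := by
      intro r hr
      obtain ⟨t, ht, hrt⟩ := (lt_isLUB_iff hL).1 hr
      exact ⟨t, ht, hrt, lt_of_le_of_ne (hL.1 ht) (fun h => hc (h ▸ ht))⟩
    have hid : ∀ᶠ y in 𝓝[<] s, ap f y = y := by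
      apply germ_left hPL hfs
      intro h
      obtain ⟨r, hr, hr'⟩ := mem_nhdsLT_iff_exists_Ioo_subset.1 h
      obtain ⟨t, ht, h1, h2⟩ := hfr r hr
      exact hr' ⟨h1, h2⟩ ht.2.2.1
    obtain ⟨r, hr, hr'⟩ := mem_nhdsLT_iff_exists_Ioo_subset.1 hid
    obtain ⟨t, ht, h1, h2⟩ := hfr r hr
    apply hc
    apply ext_id t s ht h2.le hsb
    intro y hy1 hy2
    rcases hy2.lt_or_eq with h | h
    · exact hr' ⟨by linarith, h⟩
    · rw [h]; exact hfs
  have hsb' : s = b := by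
    by_contra hne
    have hlt : s < b := lt_of_le_of_ne hsb hne
    by_cases hfr : ∃ᶠ y in 𝓝[>] s, ap f y = y
    · obtain ⟨r, hr, hr'⟩ := mem_nhdsGT_iff_exists_Ioo_subset.1 (germ_right hPL hfs hfr)
      obtain ⟨t, ht1, ht2⟩ := exists_between (lt_min (show s < r from hr) hlt)
      have ht3 := ht2.trans_le (min_le_left _ _)
      have : t ∈ T := ext_id s t hsT ht1.le (ht2.le.trans (min_le_right _ _))
        (fun y hy1 hy2 => hr' ⟨hy1, by linarith⟩)
      linarith [hL.1 this]
    · rw [not_frequently] at hfr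
      obtain ⟨r, hr, hr'⟩ := mem_nhdsGT_iff_exists_Ioo_subset.1 hfr
      obtain ⟨t, ht1, ht2⟩ := exists_between (lt_min (show s < r from hr) hlt)
      have ht3 := ht2.trans_le (min_le_left _ _)
      have ht4 := ht2.trans_le (min_le_right _ _)
      obtain ⟨u, v, huv, h1, h2⟩ := exists_orbital hPL (hr' ⟨ht1, ht3⟩)
      have hus : u = s := by
        rcases huv.out hfs with h | h
        · by_contra hne
          exact hr' ⟨lt_of_le_of_ne h (Ne.symm hne), by linarith⟩ huv.fl
        · linarith
      subst hus
      have hvb : v ≤ b := by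
        rcases huv.out hb with h | h
        · linarith
        · exact h
      have hvT : v ∈ T := by
        refine ⟨by linarith, hvb, huv.fr, fun x hx => ?_⟩
        obtain ⟨y, hy⟩ := exists_restr hPL.1 ha hfs
        obtain ⟨z, hz⟩ := exists_restr hPL.1 huv.fl huv.fr
        have : x = y * z := by
          apply ap_ext
          intro w
          rw [ap_mul]
          by_cases h1 : w ∈ Ioo a s
          · have h2 := (ap_mem_Ioo hPL.1 ha hfs).2 h1
            rw [hy.1 w h1, hz.2 _ (fun h => by linarith [h.1, h2.2]),
              hx.1 w ⟨h1.1, by linarith [h1.2, huv.1]⟩]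
          · rw [hy.2 w h1]
            by_cases h2 : w ∈ Ioo s v
            · rw [hz.1 w h2, hx.1 w ⟨by linarith [h2.1], h2.2⟩]
            · rw [hz.2 w h2]
              by_cases h3 : w ∈ Ioo a v
              · have : w = s := by
                  simp only [mem_Ioo] at h1 h2 h3
                  grind
                rw [hx.1 w h3, this, hfs]
              · exact hx.2 w h3
        rw [this]
        exact mul_mem (hsT.2.2.2 y hy) (mem_split hf huv hz)
      linarith [hL.1 hvT, huv.1]
  have := hsT.2.2.2
  rw [hsb'] at this
  exact this x hx

theorem IsRestr.mem_iff {x f : PermR} {a b t : ℝ} (hx : IsRestr x f a b) (hf : StrictMono (ap f))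
    (ha : ap f a = a) (hb : ap f b = b) : ap x t ∈ Ioo a b ↔ t ∈ Ioo a b := by
  by_cases h : t ∈ Ioo a b
  · rw [hx.1 t h, ap_mem_Ioo hf ha hb]
  · rw [hx.2 t h]

theorem IsRestr.inv {x f : PermR} {a b : ℝ} (hx : IsRestr x f a b) (hf : StrictMono (ap f))
    (ha : ap f a = a) (hb : ap f b = b) : IsRestr x⁻¹ f⁻¹ a b := by
  constructor
  · intro t ht
    apply ap_inj x
    rw [ap_ap_inv, hx.1 _ ((ap_mem_Ioo (sm_inv hf) (ap_inv_fix ha) (ap_inv_fix hb)).2 ht), ap_ap_inv]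
  · intro t ht
    exact ap_inv_fix (hx.2 t ht)

theorem IsOrbital.inv {f : PermR} {a b : ℝ} (h : IsOrbital f a b) : IsOrbital f⁻¹ a b := by
  refine ⟨h.1, fun t ht hc => ?_, fun hc => hc (ap_inv_fix h.fl), fun hc => hc (ap_inv_fix h.fr)⟩
  apply h.moves ht.1 ht.2
  have := ap_inv_fix hc
  rwa [inv_inv] at this

/-- Restrictions to disjoint intervals commute. -/
theorem IsRestr.commute {x f y g : PermR} {a b c d : ℝ} (hx : IsRestr x f a b)
    (hy : IsRestr y g c d) (hf : StrictMono (ap f)) (hg : StrictMono (ap g))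
    (ha : ap f a = a) (hb : ap f b = b) (hc : ap g c = c) (hd : ap g d = d)
    (h : b ≤ c ∨ d ≤ a) : x * y = y * x := by
  have hdis : ∀ t, t ∈ Ioo a b → t ∉ Ioo c d := by
    intro t h1 h2
    rcases h with h | h
    · linarith [h1.2, h2.1]
    · linarith [h1.1, h2.2]
  apply ap_ext
  intro t
  rw [ap_mul, ap_mul]
  by_cases h1 : t ∈ Ioo a b
  · rw [hy.2 t (hdis t h1), hy.2 _ (hdis _ ((hx.mem_iff hf ha hb).2 h1))]
  · rw [hx.2 t h1]
    by_cases h2 : t ∈ Ioo c d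
    · rw [hx.2 _ (fun h => hdis _ h ((hy.mem_iff hg hc hd).2 h2))]
    · rw [hy.2 t h2, hx.2 t h1]

/-- The generators of the split group, in unfolded form. -/
theorem split_le {G K : Subgroup PermR}
    (h : ∀ f ∈ G, ∀ a b x, IsOrbital f a b → IsRestr x f a b → x ∈ K) : SplitGroup G ≤ K := by
  rw [SplitGroup, Subgroup.closure_le]
  rintro x ⟨f, hf, a, b, ho, h1, h2⟩
  exact h f hf a b x ho ⟨h1, h2⟩

section Split

variable {G : Subgroup PermR}

theorem conj_split (hG : ∀ g ∈ G, IsPL g) (hN : NBO G) {g y : PermR} {c d : ℝ} (hg : g ∈ G)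
    (hcd : IsOrbital g c d) (hy : IsRestr y g c d) {z : PermR} (hz : z ∈ SplitGroup ⁅G, G⁆) :
    y * z * y⁻¹ ∈ SplitGroup ⁅G, G⁆ := by
  have hgs := (hG g hg).1
  suffices h : SplitGroup ⁅G, G⁆ ≤ (SplitGroup ⁅G, G⁆).comap (MulAut.conj y).toMonoidHom by
    exact h hz
  apply split_le
  intro w hw u v z huv hz
  have hwG := comm_le G hw
  have hws := (hG w hwG).1
  show y * z * y⁻¹ ∈ SplitGroup ⁅G, G⁆
  have nest : c ≤ u → v ≤ d → y * z * y⁻¹ ∈ SplitGroup ⁅G, G⁆ := by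
    intro hcu hvd
    have h1 : g * w * g⁻¹ ∈ ⁅G, G⁆ := by
      have := conj_mem_comm hw (G.inv_mem hg)
      rwa [inv_inv] at this
    have h2 : IsOrbital (g * w * g⁻¹) (ap g⁻¹ u) (ap g⁻¹ v) := by
      have := huv.conj (sm_inv hgs)
      rwa [inv_inv] at this
    have hiff : ∀ t, t ∈ Ioo (ap g⁻¹ u) (ap g⁻¹ v) ↔ ap g t ∈ Ioo u v := by
      intro t
      have e1 := hgs.lt_iff_lt (a := ap g⁻¹ u) (b := t)
      have e2 := hgs.lt_iff_lt (a := t) (b := ap g⁻¹ v)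
      rw [ap_ap_inv] at e1 e2
      simp only [mem_Ioo, e1, e2]
    have hyi := hy.inv hgs hcd.fl hcd.fr
    refine mem_split h1 h2 ⟨fun t ht => ?_, fun t ht => ?_⟩
    · rw [hiff] at ht
      have hgt : ap g t ∈ Ioo c d := ⟨by linarith [ht.1], by linarith [ht.2]⟩
      have htc := (ap_mem_Ioo hgs hcd.fl hcd.fr).1 hgt
      have hw' : ap w (ap g t) ∈ Ioo u v := (ap_mem_Ioo hws huv.fl huv.fr).2 ht
      rw [ap_mul, ap_mul, ap_mul, ap_mul, hy.1 t htc, hz.1 _ ht,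
        hyi.1 _ ⟨by linarith [hw'.1], by linarith [hw'.2]⟩]
    · rw [hiff] at ht
      rw [ap_mul, ap_mul]
      have : ap y t ∉ Ioo u v := by
        by_cases h : t ∈ Ioo c d
        · rwa [hy.1 t h]
        · rw [hy.2 t h]
          exact fun h' => h ⟨by linarith [h'.1], by linarith [h'.2]⟩
      rw [hz.2 _ this, ap_inv_ap]
  have hzK : z ∈ SplitGroup ⁅G, G⁆ := mem_split hw huv hz
  rcases hN g hg w hwG c d u v hcd huv with h | h | h | h
  · rw [hy.commute hz hgs hws hcd.fl hcd.fr huv.fl huv.fr h, mul_inv_cancel_right]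
    exact hzK
  · exact nest h.1.le h.2.ge
  · exact nest h.1.le h.2.le
  · obtain ⟨m, hm, hmm⟩ := nested_comm hG hN hg hwG hcd huv h.1 h.2
    have hyK : y ∈ SplitGroup ⁅G, G⁆ := mem_split hm (hcd.congr hmm)
      ⟨fun t ht => by rw [hy.1 t ht, hmm t ⟨ht.1.le, ht.2.le⟩], hy.2⟩
    exact mul_mem (mul_mem hyK hzK) (inv_mem hyK)

theorem conj_split' (hG : ∀ g ∈ G, IsPL g) (hN : NBO G) {y : PermR} (hy : y ∈ SplitGroup G)
    {z : PermR} (hz : z ∈ SplitGroup ⁅G, G⁆) : y * z * y⁻¹ ∈ SplitGroup ⁅G, G⁆ := by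
  have h : SplitGroup G ≤ Subgroup.normalizer (SplitGroup ⁅G, G⁆ : Set PermR) := by
    apply split_le
    intro g hg c d y hcd hy
    rw [Subgroup.mem_normalizer_iff]
    intro z
    refine ⟨fun hz => conj_split hG hN hg hcd hy hz, fun hz => ?_⟩
    have := conj_split hG hN (G.inv_mem hg) hcd.inv (hy.inv (hG g hg).1 hcd.fl hcd.fr) hz
    have e : y⁻¹ * (y * z * y⁻¹) * y⁻¹⁻¹ = z := by group
    rwa [e] at this
  exact (Subgroup.mem_normalizer_iff.1 (h hy) z).1 hz

theorem comm_gen (hG : ∀ g ∈ G, IsPL g) (hN : NBO G) {f g x y : PermR} {a b c d : ℝ} (hf : f ∈ G)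
    (hg : g ∈ G) (hab : IsOrbital f a b) (hcd : IsOrbital g c d) (hx : IsRestr x f a b)
    (hy : IsRestr y g c d) : ⁅x, y⁆ ∈ SplitGroup ⁅G, G⁆ := by
  have hfs := (hG f hf).1
  have hgs := (hG g hg).1
  have hxS : x ∈ SplitGroup G := mem_split hf hab hx
  have hyS : y ∈ SplitGroup G := mem_split hg hcd hy
  rcases hN f hf g hg a b c d hab hcd with h | h | h | h
  · rw [commutatorElement_eq_one_iff_mul_comm.2
      (hx.commute hy hfs hgs hab.fl hab.fr hcd.fl hcd.fr h)]
    exact one_mem _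
  · obtain ⟨rfl, rfl⟩ := h
    have hxi := hx.inv hfs hab.fl hab.fr
    have hyi := hy.inv hgs hcd.fl hcd.fr
    have hc := Subgroup.commutator_mem_commutator hf hg
    refine restr_mem (fun g hg => hG g (comm_le G hg)) hc hab.1.le ?_ ?_ (a := a) (b := b)
      ⟨fun t ht => ?_, fun t ht => ?_⟩
    · rw [ap_comm, hab.fl, hcd.fl, ap_inv_fix hab.fl, ap_inv_fix hcd.fl]
    · rw [ap_comm, hab.fr, hcd.fr, ap_inv_fix hab.fr, ap_inv_fix hcd.fr]
    · have h1 := (ap_mem_Ioo hfs hab.fl hab.fr).2 ht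
      have h2 := (ap_mem_Ioo hgs hcd.fl hcd.fr).2 h1
      have h3 := (ap_mem_Ioo (sm_inv hfs) hab.inv.fl hab.inv.fr).2 h2
      rw [ap_comm, ap_comm, hx.1 t ht, hy.1 _ h1, hxi.1 _ h2, hyi.1 _ h3]
    · rw [ap_comm, hx.2 t ht, hy.2 t ht, hxi.2 t ht, hyi.2 t ht]
  · obtain ⟨m, hm, hmm⟩ := nested_comm hG hN hg hf hcd hab h.1 h.2
    have hyK : y ∈ SplitGroup ⁅G, G⁆ := mem_split hm (hcd.congr hmm)
      ⟨fun t ht => by rw [hy.1 t ht, hmm t ⟨ht.1.le, ht.2.le⟩], hy.2⟩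
    exact mul_mem (conj_split' hG hN hxS hyK) (inv_mem hyK)
  · obtain ⟨m, hm, hmm⟩ := nested_comm hG hN hf hg hab hcd h.1 h.2
    have hxK : x ∈ SplitGroup ⁅G, G⁆ := mem_split hm (hab.congr hmm)
      ⟨fun t ht => by rw [hx.1 t ht, hmm t ⟨ht.1.le, ht.2.le⟩], hx.2⟩
    have e : ⁅x, y⁆ = x * (y * x⁻¹ * y⁻¹) := by rw [commutatorElement_def]; group
    rw [e]
    exact mul_mem hxK (conj_split' hG hN hyS (inv_mem hxK))

/-- If the commutators with generators are in a normalised subgroup then so are all of them. -/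
theorem comm_right {K M : Subgroup PermR} (hK : ∀ y ∈ M, ∀ z ∈ K, y * z * y⁻¹ ∈ K) (S : Set PermR)
    (hS : Subgroup.closure S ≤ M) (x : PermR) (h : ∀ y ∈ S, ⁅x, y⁆ ∈ K) :
    ∀ y ∈ Subgroup.closure S, ⁅x, y⁆ ∈ K := by
  intro y hy
  induction hy using Subgroup.closure_induction with
  | mem y hy => exact h y hy
  | one => simp
  | mul y z hy hz iy iz =>
    have e : ⁅x, y * z⁆ = ⁅x, y⁆ * (y * ⁅x, z⁆ * y⁻¹) := by
      simp only [commutatorElement_def]; group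
    rw [e]
    exact mul_mem iy (hK y (hS hy) _ iz)
  | inv y hy iy =>
    have e : ⁅x, y⁻¹⁆ = y⁻¹ * ⁅x, y⁆⁻¹ * y⁻¹⁻¹ := by
      simp only [commutatorElement_def]; group
    rw [e]
    exact hK _ (hS (inv_mem hy)) _ (inv_mem iy)

theorem split_comm (hG : ∀ g ∈ G, IsPL g) (hN : NBO G) :
    ⁅SplitGroup G, SplitGroup G⁆ ≤ SplitGroup ⁅G, G⁆ := by
  have hK : ∀ y ∈ SplitGroup G, ∀ z ∈ SplitGroup ⁅G, G⁆, y * z * y⁻¹ ∈ SplitGroup ⁅G, G⁆ :=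
    fun y hy z hz => conj_split' hG hN hy hz
  rw [Subgroup.commutator_le]
  intro x hx
  apply comm_right hK _ le_rfl
  rintro y ⟨g, hg, c, d, hcd, hy⟩
  rw [← commutatorElement_inv]
  apply inv_mem
  revert x
  apply comm_right hK _ le_rfl
  rintro x ⟨f, hf, a, b, hab, hx⟩
  exact comm_gen hG hN hg hf hcd hab hy hx

end Split

theorem DS_mono (n : ℕ) : ∀ {G K : Subgroup PermR}, G ≤ K → DS n G ≤ DS n K := by
  induction n with
  | zero => exact fun h => h
  | succ n ih => exact fun h => ih (Subgroup.commutator_mono h h)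

theorem DS_split (n : ℕ) : ∀ G : Subgroup PermR, (∀ g ∈ G, IsPL g) → NBO G →
    DS n (SplitGroup G) ≤ SplitGroup (DS n G) := by
  induction n with
  | zero => exact fun G _ _ => le_rfl
  | succ n ih =>
    intro G hG hN
    exact (DS_mono n (split_comm hG hN)).trans
      (ih ⁅G, G⁆ (fun g hg => hG g (comm_le G hg)) (hN.mono (comm_le G)))

theorem split_bot : SplitGroup ⊥ = ⊥ := by
  rw [eq_bot_iff]
  apply split_le
  intro f hf a b x ho _
  rw [Subgroup.mem_bot] at hf
  subst hf
  obtain ⟨t, h1, h2⟩ := exists_between ho.1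
  exact (ho.moves h1 h2 (ap_one t)).elim

theorem DS_succ (n : ℕ) : ∀ G : Subgroup PermR, DS (n + 1) G = ⁅DS n G, DS n G⁆ := by
  induction n with
  | zero => exact fun G => rfl
  | succ n ih => exact fun G => ih ⁅G, G⁆

theorem map_derived (G : Subgroup PermR) (n : ℕ) :
    (derivedSeries G n).map G.subtype = DS n G := by
  induction n with
  | zero => simp [DS, ← MonoidHom.range_eq_map]
  | succ n ih => rw [derivedSeries_succ, Subgroup.map_commutator, ih, DS_succ]

theorem derived_bot_iff (G : Subgroup PermR) (n : ℕ) : derivedSeries G n = ⊥ ↔ DS n G = ⊥ := by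
  rw [← map_derived, Subgroup.map_eq_bot_iff_of_injective _ G.subtype_injective]

theorem derived_iff (G H : Subgroup PermR) (hPL : ∀ g ∈ G, IsPL g)
    (hGH : G ≤ H) (hHS : H ≤ SplitGroup G) (n : ℕ) :
    derivedSeries G n = ⊥ ↔ derivedSeries H n = ⊥ := by
  rw [derived_bot_iff, derived_bot_iff]
  constructor
  · intro h
    have h1 := (DS_mono n hHS).trans (DS_split n G hPL (nbo_of_DS n G hPL h))
    rwa [h, split_bot, le_bot_iff] at h1
  · intro h
    have h1 := DS_mono n hGH
    rwa [h, le_bot_iff] at h1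

end Aux

theorem statement12 (G H : Subgroup PermR) (hPL : ∀ g ∈ G, IsPL g)
    (hGH : G ≤ H) (hHS : H ≤ SplitGroup G) :
    derivedLength ↥G = derivedLength ↥H ∧ (IsSolvable ↥G ↔ IsSolvable ↥H) := by
  have h := derived_iff G H hPL hGH hHS
  refine ⟨?_, ?_⟩
  · unfold derivedLength
    congr 1
    ext n
    exact h n
  · show Group.IsSolvable ↥G ↔ Group.IsSolvable ↥H
    rw [Group.isSolvable_def, Group.isSolvable_def]
    exact exists_congr h

end PLPaper
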